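/- arXiv:math/0602343 — 2 statements merged into one kernel-verified Lean document; each statement's English description precedes it below -/
import Mathlib

section
/- Let f be an analytic self-map of ℂ⁺ and let a < b be real numbers such that for Lebesgue-almost every x ∈ (a,b) the limit lim_{y↓0} f(x+iy) exists and is real. Suppose x₀ ∈ (a,b) is a point through which f cannot be continued meromorphically, i.e. there is no open neighborhood U of x₀ in ℂ and meromorphic function g on U with g = f on U ∩ ℂ⁺. Then for any real numbers c < d there exists a set E ⊆ (a,b) of strictly positive Lebesgue measure such that lim_{y↓0} f(x+iy) exists for every x ∈ E and the set {lim_{y↓0} f(x+iy) : x ∈ E} is dense in the interval (c,d). -/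
open Complex Filter Set Topology MeasureTheory

/-- The open upper half-plane `ℂ⁺ = {z : ℂ | Im z > 0}`. -/
def UHP : Set ℂ := {z : ℂ | 0 < z.im}

/-!
If the boundary values of `f` near `x₀` were not dense in `(c, d)`, they would avoid some
`[p, q] ⊆ (c, d)`, and so does `f` itself in `ℂ⁺`. Composing `f` with a conformal map of
`ℂ \ [p, q]` onto a bounded region that is real on `ℝ \ [p, q]` gives a bounded function with real
boundary values almost everywhere. These boundary values need not be continuous, but a primitive of
the function is Lipschitz, hence continuous up to the real axis, and by dominated convergence its
increments along the axis are integrals of real boundary values. Schwarz reflection therefore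
continues the primitive, minus its value at `x₀`, analytically across the axis. Differentiating, and
inverting the conformal map by a rational function, continues `f` meromorphically through `x₀`.
-/

open scoped NNReal ComplexConjugate

/-- `l` is the boundary value `lim_{y ↓ 0} f (x + i y)` of `f` at the real point `x`. Only the
approach along the vertical ray is required. -/
def HasVerticalLimit {E : Type*} [TopologicalSpace E] (f : ℂ → E) (x : ℝ) (l : E) : Prop :=
  Tendsto (fun y : ℝ => f (x + y * I)) (𝓝[>] 0) (𝓝 l)

/-- `f`, seen as a function on `ℂ⁺`, can be continued meromorphically through `x`: some
meromorphic function near `x` agrees with `f` on the part of its domain lying in `ℂ⁺`. -/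
def HasMeromorphicContinuationAt (f : ℂ → ℂ) (x : ℂ) : Prop :=
  ∃ (U : Set ℂ) (g : ℂ → ℂ), IsOpen U ∧ x ∈ U ∧ MeromorphicOn g U ∧ EqOn f g (U ∩ UHP)

lemma isOpen_UHP : IsOpen UHP := isOpen_im_gt 0

lemma convex_UHP : Convex ℝ UHP := convex_halfSpace_im_gt 0

lemma ofReal_add_mul_I_mem_UHP {x y : ℝ} : (x + y * I : ℂ) ∈ UHP ↔ 0 < y := by
  simp [UHP]

section Morera

variable {E : Type*} [NormedAddCommGroup E] [NormedSpace ℂ E] {Q : ℂ → E} {z w : ℂ}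

lemma wedgeIntegral_add_wedgeIntegral_split (hQ : ContinuousOn Q (Rectangle z w)) {s : ℝ}
    (hs : s ∈ uIcc z.im w.im) :
    wedgeIntegral z w Q + wedgeIntegral w z Q =
      (wedgeIntegral z (w.re + s * I) Q + wedgeIntegral (w.re + s * I) z Q) +
        (wedgeIntegral (z.re + s * I) w Q + wedgeIntegral w (z.re + s * I) Q) := by
  have vertical_integrable {x a b : ℝ} (hx : x ∈ uIcc z.re w.re)
      (hab : uIcc a b ⊆ uIcc z.im w.im) :
      IntervalIntegrable (fun y : ℝ => Q (x + y * I)) volume a b := by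
    refine (hQ.comp (by fun_prop) fun y hy => ?_).intervalIntegrable
    simpa [Rectangle, mem_reProdIm] using And.intro hx (hab hy)
  have vertical_split {x : ℝ} (hx : x ∈ uIcc z.re w.re) :
      ∫ y in z.im..w.im, Q (x + y * I) =
        (∫ y in z.im..s, Q (x + y * I)) + ∫ y in s..w.im, Q (x + y * I) :=
    (intervalIntegral.integral_add_adjacent_intervals
      (vertical_integrable hx (uIcc_subset_uIcc left_mem_uIcc hs))
      (vertical_integrable hx (uIcc_subset_uIcc hs right_mem_uIcc))).symm
  simp only [wedgeIntegral_add_wedgeIntegral_eq, vertical_split left_mem_uIcc,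
    vertical_split right_mem_uIcc, smul_add, add_re, ofReal_re, mul_re, I_re, mul_zero, ofReal_im,
    I_im, mul_one, sub_self, add_zero, add_im, mul_im, zero_add]
  abel

lemma wedgeIntegral_add_wedgeIntegral_eq_zero_of_zero_notMem (hQ : ContinuousOn Q (Rectangle z w))
    (hd : ∀ u ∈ Rectangle z w, u.im ≠ 0 → DifferentiableAt ℂ Q u)
    (h0 : (0 : ℝ) ∉ Ioo (min z.im w.im) (max z.im w.im)) :
    wedgeIntegral z w Q + wedgeIntegral w z Q = 0 := by
  rw [wedgeIntegral_add_wedgeIntegral_eq]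
  refine integral_boundary_rect_eq_zero_of_continuousOn_of_differentiableOn Q z w hQ fun u hu => ?_
  refine (hd u ⟨Ioo_subset_Icc_self hu.1, Ioo_subset_Icc_self hu.2⟩ fun hu0 => h0 ?_)
    |>.differentiableWithinAt
  exact hu0 ▸ hu.2

lemma differentiableOn_of_continuousOn_of_im_ne_zero [CompleteSpace E] {U : Set ℂ} (hU : IsOpen U)
    (hQ : ContinuousOn Q U) (hd : ∀ z ∈ U, z.im ≠ 0 → DifferentiableAt ℂ Q z) :
    DifferentiableOn ℂ Q U := by
  rw [← isConservativeOn_and_continuousOn_iff_isDifferentiableOn hU]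
  refine ⟨fun z w hzw => ?_, hQ⟩
  rw [← add_eq_zero_iff_eq_neg]
  have off_axis {z' w' : ℂ} (hsub : Rectangle z' w' ⊆ Rectangle z w)
      (h0 : (0 : ℝ) ∉ Ioo (min z'.im w'.im) (max z'.im w'.im)) :
      wedgeIntegral z' w' Q + wedgeIntegral w' z' Q = 0 :=
    wedgeIntegral_add_wedgeIntegral_eq_zero_of_zero_notMem (hQ.mono (hsub.trans hzw))
      (fun u hu => hd u (hzw (hsub hu))) h0
  by_cases h0 : (0 : ℝ) ∈ uIcc z.im w.im
  · rw [wedgeIntegral_add_wedgeIntegral_split (hQ.mono hzw) h0, off_axis, off_axis, add_zero]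
    · refine reProdIm_subset_iff.2 (prod_mono ?_ ?_)
      · simp
      · simpa using uIcc_subset_uIcc h0 right_mem_uIcc
    · simp only [add_im, ofReal_im, mul_I_im, ofReal_re, zero_add]
      grind
    · refine reProdIm_subset_iff.2 (prod_mono ?_ ?_)
      · simp
      · simpa using uIcc_subset_uIcc left_mem_uIcc h0
    · simp only [add_im, ofReal_im, mul_I_im, ofReal_re, zero_add]
      grind
  · exact off_axis subset_rfl fun h => h0 (Ioo_subset_Icc_self h)

end Morera

section Reflection

/-- The extension of `F`, given on the closed upper half-plane, to the lower half-plane by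
`z ↦ conj (F (conj z))`; values of `F` below the real axis are ignored. -/
noncomputable def schwarzReflection (F : ℂ → ℂ) (z : ℂ) : ℂ :=
  if 0 ≤ z.im then F z else conj (F (conj z))

variable {F : ℂ → ℂ} {D : Set ℂ}

lemma eqOn_schwarzReflection (F : ℂ → ℂ) : EqOn (schwarzReflection F) F UHP :=
  fun _ hz => if_pos (le_of_lt hz)

lemma continuousOn_schwarzReflection (hD : MapsTo conj D D)
    (hF : ContinuousOn F (D ∩ {z | 0 ≤ z.im})) (hreal : ∀ x : ℝ, (x : ℂ) ∈ D → (F x).im = 0) :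
    ContinuousOn (schwarzReflection F) D := by
  have hclosed : IsClosed {z : ℂ | 0 ≤ z.im} := isClosed_le continuous_const continuous_im
  refine ContinuousOn.if (fun z hz => ?_) ?_ ?_
  · have him : z.im = 0 := (frontier_le_subset_eq continuous_const continuous_im hz.2).symm
    have hz_re : (z.re : ℂ) = z := Complex.ext (ofReal_re _) (him.symm ▸ ofReal_im _)
    rw [conj_eq_iff_im.2 him, eq_comm, conj_eq_iff_im, ← hz_re]
    exact hreal _ (hz_re.symm ▸ hz.1)
  · rwa [hclosed.closure_eq]
  · refine continuous_conj.comp_continuousOn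
      (hF.comp continuous_conj.continuousOn fun z hz => ⟨hD hz.1, ?_⟩)
    have him : z.im ≤ 0 :=
      closure_lt_subset_le continuous_im continuous_const (by simpa only [not_le] using hz.2)
    simpa using him

lemma differentiableOn_schwarzReflection (hDo : IsOpen D) (hD : MapsTo conj D D)
    (hF : ContinuousOn F (D ∩ {z | 0 ≤ z.im})) (hFd : DifferentiableOn ℂ F (D ∩ UHP))
    (hreal : ∀ x : ℝ, (x : ℂ) ∈ D → (F x).im = 0) :
    DifferentiableOn ℂ (schwarzReflection F) D := by
  have hFat {z : ℂ} (hz : z ∈ D ∩ UHP) : DifferentiableAt ℂ F z :=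
    hFd.differentiableAt ((hDo.inter isOpen_UHP).mem_nhds hz)
  refine differentiableOn_of_continuousOn_of_im_ne_zero hDo
    (continuousOn_schwarzReflection hD hF hreal) fun z hz him => ?_
  rcases him.lt_or_gt with hneg | hpos
  · have hconj : DifferentiableAt ℂ (conj ∘ F ∘ conj) z :=
      differentiableAt_conj_conj_iff.2 (hFat ⟨hD hz, by simpa [UHP] using hneg⟩)
    refine hconj.congr_of_eventuallyEq ?_
    filter_upwards [(isOpen_im_lt 0).mem_nhds hneg] with w hw
    exact if_neg (not_le.2 hw)
  · exact (hFat ⟨hz, hpos⟩).congr_of_eventuallyEq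
      ((eqOn_schwarzReflection F).eventuallyEq_of_mem (isOpen_UHP.mem_nhds hpos))

end Reflection

section BoundaryPrimitive

variable {E : Type*} [NormedAddCommGroup E] [NormedSpace ℂ E] {H P : ℂ → E} {D : Set ℂ} {K : ℝ≥0}

lemma exists_continuous_primitive_of_bounded [FiniteDimensional ℂ E] (hD : IsOpen D)
    (hconv : Convex ℝ D) (hH : DifferentiableOn ℂ H D) (hK : ∀ z ∈ D, ‖H z‖₊ ≤ K) :
    ∃ P : ℂ → E, Continuous P ∧ ∀ z ∈ D, HasDerivAt P (H z) z := by
  have := FiniteDimensional.complete ℂ E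
  obtain ⟨P₀, hP₀⟩ := hconv.exists_forall_hasDerivWithinAt hH
  obtain ⟨P, hPlip, hPP₀⟩ :=
    (hconv.lipschitzOnWith_of_nnnorm_hasDerivWithin_le hP₀ hK).extend_finite_dimension
  refine ⟨P, hPlip.continuous, fun z hz => ?_⟩
  exact ((hP₀ z hz).congr_of_mem (fun w hw => (hPP₀ hw).symm) hz).hasDerivAt (hD.mem_nhds hz)

lemma eventually_forall_add_mul_I_mem {S : Set ℝ} (hS : IsCompact S) (hD : IsOpen D)
    (hSD : ∀ t ∈ S, (t : ℂ) ∈ D) :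
    ∀ᶠ y : ℝ in 𝓝[>] 0, ∀ t ∈ S, (t + y * I : ℂ) ∈ D ∩ UHP := by
  have hnhds : ∀ᶠ y : ℝ in 𝓝 0, ∀ t ∈ S, (t + y * I : ℂ) ∈ D :=
    hS.eventually_forall_of_forall_eventually fun t ht =>
      (by fun_prop : Continuous fun p : ℝ × ℝ => (p.2 + p.1 * I : ℂ)).continuousAt.eventually_mem
        (hD.mem_nhds (by simpa using hSD t ht))
  filter_upwards [nhdsWithin_le_nhds hnhds, self_mem_nhdsWithin] with y hy hpos t ht
  exact ⟨hy t ht, ofReal_add_mul_I_mem_UHP.2 hpos⟩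

lemma integral_eq_sub_of_hasVerticalLimit [CompleteSpace E] {h : ℝ → E} {a b : ℝ} (hD : IsOpen D)
    (hP : Continuous P) (hPH : ∀ z ∈ D ∩ UHP, HasDerivAt P (H z) z)
    (hK : ∀ z ∈ D ∩ UHP, ‖H z‖₊ ≤ K) (hab : ∀ t ∈ uIcc a b, (t : ℂ) ∈ D)
    (hlim : ∀ᵐ t : ℝ, (t : ℂ) ∈ D → HasVerticalLimit H t (h t)) :
    ∫ t in a..b, h t = P b - P a := by
  have hHc : ContinuousOn H (D ∩ UHP) :=
    (IsExactOn.differentiableOn (hD.inter isOpen_UHP) ⟨P, hPH⟩).continuousOn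
  have segment_mem := eventually_forall_add_mul_I_mem isCompact_uIcc hD hab
  have continuousOn_segment {y : ℝ} (hy : ∀ t ∈ uIcc a b, (t + y * I : ℂ) ∈ D ∩ UHP) :
      ContinuousOn (fun t : ℝ => H (t + y * I)) (uIcc a b) :=
    hHc.comp (by fun_prop) hy
  have integral_segment : ∀ᶠ y : ℝ in 𝓝[>] 0,
      P (b + y * I) - P (a + y * I) = ∫ t in a..b, H (t + y * I) := by
    filter_upwards [segment_mem] with y hy
    exact (intervalIntegral.integral_eq_sub_of_hasDerivAt
      (fun t ht => by
        simpa using (hPH _ (hy t ht)).scomp t (ofRealCLM.hasDerivAt.add_const (y * I)))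
      (continuousOn_segment hy).intervalIntegrable).symm
  have tendsto_integral : Tendsto (fun y : ℝ => ∫ t in a..b, H (t + y * I)) (𝓝[>] 0)
      (𝓝 (∫ t in a..b, h t)) := by
    refine intervalIntegral.tendsto_integral_filter_of_dominated_convergence (fun _ => (K : ℝ))
      ?_ ?_ intervalIntegrable_const ?_
    · filter_upwards [segment_mem] with y hy
      exact ((continuousOn_segment hy).mono uIoc_subset_uIcc).aestronglyMeasurable
        measurableSet_uIoc
    · filter_upwards [segment_mem] with y hy
      exact .of_forall fun t ht => hK _ (hy t (uIoc_subset_uIcc ht))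
    · filter_upwards [hlim] with t ht hab'
      exact ht (hab t (uIoc_subset_uIcc hab'))
  have tendsto_sub : Tendsto (fun y : ℝ => P (b + y * I) - P (a + y * I)) (𝓝[>] 0)
      (𝓝 (P b - P a)) := by
    refine Tendsto.mono_left ?_ nhdsWithin_le_nhds
    exact (by fun_prop : Continuous fun y : ℝ => P (b + y * I) - P (a + y * I)).tendsto' 0 _
      (by simp)
  exact tendsto_nhds_unique (tendsto_integral.congr' (integral_segment.mono fun _ => Eq.symm))
    tendsto_sub

end BoundaryPrimitive

theorem exists_differentiableOn_continuation_of_bounded {H : ℂ → ℂ} {V : Set ℂ} {K : ℝ≥0}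
    {h : ℝ → ℝ} {x₀ : ℝ} (hV : IsOpen V) (hx₀ : (x₀ : ℂ) ∈ V) (hH : DifferentiableOn ℂ H (V ∩ UHP))
    (hK : ∀ z ∈ V ∩ UHP, ‖H z‖₊ ≤ K)
    (hlim : ∀ᵐ x : ℝ, (x : ℂ) ∈ V → HasVerticalLimit H x (h x : ℂ)) :
    ∃ U ⊆ V, IsOpen U ∧ (x₀ : ℂ) ∈ U ∧
      ∃ g : ℂ → ℂ, DifferentiableOn ℂ g U ∧ EqOn H g (U ∩ UHP) := by
  obtain ⟨r, hr, hrV⟩ := Metric.isOpen_iff.1 hV _ hx₀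
  set D := Metric.ball (x₀ : ℂ) r
  have hDV : D ∩ UHP ⊆ V ∩ UHP := inter_subset_inter_left _ hrV
  have hDo : IsOpen D := Metric.isOpen_ball
  have hx₀D : (x₀ : ℂ) ∈ D := Metric.mem_ball_self hr
  have hDconj : MapsTo conj D D := fun z hz => by
    simpa [D, ← dist_conj_conj z] using hz
  obtain ⟨P, hP, hPH⟩ := exists_continuous_primitive_of_bounded (hDo.inter isOpen_UHP)
    ((convex_ball _ _).inter convex_UHP) (hH.mono hDV) fun z hz => hK z (hDV hz)
  let F : ℂ → ℂ := fun z => P z - P x₀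
  have hFH : ∀ z ∈ D ∩ UHP, HasDerivAt F (H z) z := fun z hz => (hPH z hz).sub_const _
  have hFreal : ∀ x : ℝ, (x : ℂ) ∈ D → (F x).im = 0 := fun x hx => by
    have hsegment : ∀ t ∈ uIcc x₀ x, (t : ℂ) ∈ D := fun t ht => by
      simp only [D, Metric.mem_ball, isometry_ofReal.dist_eq, Real.dist_eq] at hx ⊢
      exact (abs_sub_left_of_mem_uIcc ht).trans_lt hx
    have hFx : ∫ t in x₀..x, (h t : ℂ) = F x :=
      integral_eq_sub_of_hasVerticalLimit hDo hP hPH (fun z hz => hK z (hDV hz)) hsegment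
        (hlim.mono fun t ht htD => ht (hrV htD))
    rw [← hFx, intervalIntegral.integral_ofReal, ofReal_im]
  have hQ : DifferentiableOn ℂ (schwarzReflection F) D :=
    differentiableOn_schwarzReflection hDo hDconj (hP.sub continuous_const).continuousOn
      (fun z hz => (hFH z hz).differentiableAt.differentiableWithinAt) hFreal
  refine ⟨D, hrV, hDo, hx₀D, deriv (schwarzReflection F), hQ.deriv hDo, fun z hz => ?_⟩
  rw [((eqOn_schwarzReflection F).eventuallyEq_of_mem (isOpen_UHP.mem_nhds hz.2)).deriv_eq,
    (hFH z hz).deriv]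

section SlitMap

/-- The conformal map `w ↦ 1 / (1 + √((w - p) / (w - q)))` of `ℂ \ [p, q]` onto a bounded region,
built from the principal square root. -/
noncomputable def slitMap (p q : ℝ) (w : ℂ) : ℂ := (1 + sqrt ((w - p) / (w - q)))⁻¹

/-- The inverse of `slitMap p q` as a rational function, which makes sense on all of `ℂ` up to the
pole at `1 / 2` (the image of `∞`). -/
noncomputable def slitMapInv (p q : ℝ) (u : ℂ) : ℂ := (q * (1 - u) ^ 2 - p * u ^ 2) / (1 - 2 * u)

variable {p q : ℝ} {w : ℂ}

lemma re_sqrt_nonneg (w : ℂ) : 0 ≤ (sqrt w).re := by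
  rw [sqrt, cpow_inv_two_re]
  positivity

lemma one_le_norm_one_add_sqrt (w : ℂ) : 1 ≤ ‖1 + sqrt w‖ :=
  calc
    1 ≤ (1 + sqrt w).re := by simpa using re_sqrt_nonneg w
    _ ≤ ‖1 + sqrt w‖ := re_le_norm _

lemma one_add_sqrt_ne_zero (w : ℂ) : 1 + sqrt w ≠ 0 :=
  norm_pos_iff.1 (one_pos.trans_le (one_le_norm_one_add_sqrt w))

lemma div_mem_slitPlane_of_notMem_slit (hpq : p ≤ q) (hw : w ∉ ((↑) '' Icc p q : Set ℂ)) :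
    (w - p) / (w - q) ∈ slitPlane := by
  have hwq : w - q ≠ 0 := fun h => hw ⟨q, right_mem_Icc.2 hpq, (sub_eq_zero.1 h).symm⟩
  by_contra hquot
  obtain ⟨hre, him⟩ : ((w - p) / (w - q)).re ≤ 0 ∧ ((w - p) / (w - q)).im = 0 := by
    simpa [mem_slitPlane_iff] using hquot
  obtain ⟨r, hr, hrw⟩ : ∃ r : ℝ, 0 ≤ r ∧ (w - p) / (w - q) = -r :=
    ⟨-((w - p) / (w - q)).re, neg_nonneg.2 hre, Complex.ext (by simp) (by simpa using him)⟩
  have hr1 : 0 < 1 + r := by positivity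
  refine hw ⟨(p + r * q) / (1 + r), ⟨?_, ?_⟩, ?_⟩
  · rw [le_div_iff₀ hr1]
    linarith [mul_le_mul_of_nonneg_left hpq hr]
  · rw [div_le_iff₀ hr1]
    linarith
  · have hr1' : (1 + r : ℂ) ≠ 0 := mod_cast hr1.ne'
    rw [div_eq_iff hwq] at hrw
    push_cast
    rw [div_eq_iff hr1']
    linear_combination -hrw

lemma nnnorm_slitMap_le_one (p q : ℝ) (w : ℂ) : ‖slitMap p q w‖₊ ≤ 1 := by
  simpa [slitMap, ← NNReal.coe_le_coe] using inv_le_one_of_one_le₀ (one_le_norm_one_add_sqrt _)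

lemma differentiableAt_slitMap (hpq : p ≤ q) (hw : w ∉ ((↑) '' Icc p q : Set ℂ)) :
    DifferentiableAt ℂ (slitMap p q) w := by
  have hwq : w - q ≠ 0 := fun h => hw ⟨q, right_mem_Icc.2 hpq, (sub_eq_zero.1 h).symm⟩
  have hdiv : DifferentiableAt ℂ (fun w : ℂ => (w - p) / (w - q)) w := by
    fun_prop (disch := assumption)
  have hsqrt := (differentiableAt_sqrt (div_mem_slitPlane_of_notMem_slit hpq hw)).comp w hdiv
  exact (hsqrt.const_add 1).inv (one_add_sqrt_ne_zero _)

lemma im_slitMap_ofReal (hpq : p ≤ q) {x : ℝ} (hx : x ∉ Icc p q) : (slitMap p q x).im = 0 := by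
  have hquot : 0 ≤ (x - p) / (x - q) := by
    rcases lt_or_ge x p with hxp | hpx
    · exact div_nonneg_of_nonpos (by linarith) (by linarith)
    · have hqx : q < x := not_le.1 fun hxq => hx ⟨hpx, hxq⟩
      exact div_nonneg (by linarith) (by linarith)
  have hsqrt : sqrt (((x : ℂ) - p) / (x - q)) = √((x - p) / (x - q)) := by
    rw [← ofReal_sub, ← ofReal_sub, ← ofReal_div, sqrt_of_nonneg (mod_cast hquot), ofReal_re]
  rw [slitMap, hsqrt, ← ofReal_one, ← ofReal_add, ← ofReal_inv, ofReal_im]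

lemma slitMapInv_slitMap (hpq : p ≠ q) (hw : w ≠ q) : slitMapInv p q (slitMap p q w) = w := by
  have hwq : w - q ≠ 0 := sub_ne_zero.2 hw
  have hpq' : (p : ℂ) - q ≠ 0 := sub_ne_zero.2 (ofReal_injective.ne hpq)
  set s := sqrt ((w - p) / (w - q)) with hs
  have hsq : s ^ 2 * (w - q) = w - p := by
    rw [hs, sqrt, cpow_ofNat_inv_pow, div_mul_cancel₀ _ hwq]
  have hs_add : 1 + s ≠ 0 := one_add_sqrt_ne_zero _
  have hs_sub : s - 1 ≠ 0 := fun h => hpq' (by linear_combination hsq - (s + 1) * (w - q) * h)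
  have hden : 1 - 2 * (1 + s)⁻¹ = (s - 1) / (1 + s) := by field_simp; ring
  rw [slitMapInv, slitMap, ← hs, hden]
  field_simp
  linear_combination -hsq

lemma meromorphicAt_slitMapInv_comp (p q : ℝ) {g : ℂ → ℂ} {z : ℂ} (hg : AnalyticAt ℂ g z) :
    MeromorphicAt (fun z => slitMapInv p q (g z)) z := by
  have hnum : AnalyticAt ℂ (fun z => q * (1 - g z) ^ 2 - p * g z ^ 2) z := by fun_prop
  have hden : AnalyticAt ℂ (fun z => 1 - 2 * g z) z := by fun_prop
  exact hnum.meromorphicAt.div hden.meromorphicAt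

end SlitMap

theorem hasMeromorphicContinuationAt_of_notMem_slit {f : ℂ → ℂ} {V : Set ℂ} {L : ℝ → ℝ}
    {p q x₀ : ℝ} (hpq : p < q) (hV : IsOpen V) (hx₀ : (x₀ : ℂ) ∈ V)
    (hf : DifferentiableOn ℂ f (V ∩ UHP))
    (hslit : ∀ z ∈ V ∩ UHP, f z ∉ ((↑) '' Icc p q : Set ℂ))
    (hlim : ∀ᵐ x : ℝ, (x : ℂ) ∈ V → L x ∉ Icc p q ∧ HasVerticalLimit f x (L x : ℂ)) :
    HasMeromorphicContinuationAt f x₀ := by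
  have hφf : DifferentiableOn ℂ (slitMap p q ∘ f) (V ∩ UHP) := fun z hz =>
    (differentiableAt_slitMap hpq.le (hslit z hz)).comp_differentiableWithinAt z (hf z hz)
  have hφlim : ∀ᵐ x : ℝ, (x : ℂ) ∈ V →
      HasVerticalLimit (slitMap p q ∘ f) x ((slitMap p q (L x)).re : ℂ) := by
    filter_upwards [hlim] with x hx hxV
    obtain ⟨hLx, hfx⟩ := hx hxV
    have hreal : ((slitMap p q (L x)).re : ℂ) = slitMap p q (L x) :=
      Complex.ext rfl (im_slitMap_ofReal hpq.le hLx).symm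
    rw [hreal]
    exact (differentiableAt_slitMap hpq.le (by simpa using hLx)).continuousAt.tendsto.comp hfx
  obtain ⟨U, hUV, hU, hx₀U, g, hg, hfg⟩ :=
    exists_differentiableOn_continuation_of_bounded hV hx₀ hφf
      (fun z _ => nnnorm_slitMap_le_one p q (f z)) hφlim
  refine ⟨U, fun z => slitMapInv p q (g z), hU, hx₀U,
    fun z hz => meromorphicAt_slitMapInv_comp p q (hg.analyticAt (hU.mem_nhds hz)), fun z hz => ?_⟩
  have hfq : f z ≠ q := fun h => hslit z ⟨hUV hz.1, hz.2⟩ ⟨q, right_mem_Icc.2 hpq.le, h.symm⟩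
  simpa only [← hfg hz, Function.comp_apply] using (slitMapInv_slitMap hpq.ne hfq).symm

theorem seidel_caratheodory_halfplane_general {f : ℂ → ℂ} {V : Set ℂ} {x₀ c d : ℝ}
    (hV : IsOpen V) (hx₀ : (x₀ : ℂ) ∈ V) (hf : DifferentiableOn ℂ f (V ∩ UHP))
    (homit : ∀ z ∈ V ∩ UHP, f z ∉ ((↑) '' Ioo c d : Set ℂ))
    (hae : ∀ᵐ x : ℝ, (x : ℂ) ∈ V → ∃ l : ℝ, HasVerticalLimit f x (l : ℂ))
    (hnoext : ¬ HasMeromorphicContinuationAt f x₀) :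
    ∃ (E : Set ℝ) (L : ℝ → ℝ), E ⊆ (↑) ⁻¹' V ∧ 0 < volume E ∧
      (∀ x ∈ E, HasVerticalLimit f x (L x : ℂ)) ∧ Ioo c d ⊆ closure (L '' E) := by
  choose! L hL using fun (x : ℝ) (hx : ∃ l : ℝ, HasVerticalLimit f x (l : ℂ)) => hx
  let E : Set ℝ := (↑) ⁻¹' V ∩ {x | HasVerticalLimit f x (L x : ℂ)}
  have hmem_E : ∀ᵐ x : ℝ, (x : ℂ) ∈ V → x ∈ E := hae.mono fun x hx hxV => ⟨hxV, hL x (hx hxV)⟩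
  have hvol : 0 < volume E :=
    ((hV.preimage continuous_ofReal).measure_pos volume ⟨x₀, hx₀⟩).trans_le
      (measure_mono_ae hmem_E)
  refine ⟨E, L, inter_subset_left, hvol, fun x hx => hx.2, fun t ht => ?_⟩
  by_contra htcl
  obtain ⟨p, q, -, hpq_nhds, hpq⟩ := exists_Icc_mem_subset_of_mem_nhds
    (inter_mem (isOpen_Ioo.mem_nhds ht) (isClosed_closure.isOpen_compl.mem_nhds htcl))
  have htpq : t ∈ Ioo p q := Icc_mem_nhds_iff.1 hpq_nhds
  refine hnoext (hasMeromorphicContinuationAt_of_notMem_slit (L := L) (htpq.1.trans htpq.2) hV hx₀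
    hf (fun z hz hfz => homit z hz (image_mono (fun s hs => (hpq hs).1) hfz)) ?_)
  filter_upwards [hmem_E] with x hx hxV
  exact ⟨fun hLx => (hpq hLx).2 (subset_closure (mem_image_of_mem L (hx hxV))), (hx hxV).2⟩

/-- Let `f` be an analytic self-map of `ℂ⁺` and `a < b` reals such that for a.e.
`x ∈ (a,b)` the boundary limit `lim_{y↓0} f(x+iy)` exists and is real.  If
`x₀ ∈ (a,b)` is a point through which `f` has no meromorphic continuation, then
for any `c < d` there is a set `E ⊆ (a,b)` of positive Lebesgue measure such that
the boundary limit exists at every point of `E` and the set of these limits is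
dense in `(c,d)`. -/
theorem seidel_caratheodory_halfplane
    (f : ℂ → ℂ)
    (hfd : DifferentiableOn ℂ f UHP)
    (hfm : Set.MapsTo f UHP UHP)
    (a b : ℝ) (hab : a < b)
    (hae : ∀ᵐ x ∂(volume.restrict (Set.Ioo a b)),
      ∃ L : ℝ, Tendsto (fun y : ℝ => f (Complex.ofReal x + y * Complex.I)) (𝓝[>] (0:ℝ)) (𝓝 (L : ℂ)))
    (x₀ : ℝ) (hx₀ : x₀ ∈ Set.Ioo a b)
    (hnoext : ¬ ∃ (U : Set ℂ) (g : ℂ → ℂ), IsOpen U ∧ (x₀ : ℂ) ∈ U ∧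
      MeromorphicOn g U ∧ Set.EqOn f g (U ∩ UHP))
    (c d : ℝ) (hcd : c < d) :
    ∃ (E : Set ℝ) (L : ℝ → ℝ), E ⊆ Set.Ioo a b ∧ 0 < volume E ∧
      (∀ x ∈ E, Tendsto (fun y : ℝ => f (Complex.ofReal x + y * Complex.I)) (𝓝[>] (0:ℝ)) (𝓝 (Complex.ofReal (L x)))) ∧
      (∀ t ∈ Set.Ioo c d, t ∈ closure (L '' E)) := by
  exact seidel_caratheodory_halfplane_general (V := re ⁻¹' Ioo a b)
    (isOpen_Ioo.preimage continuous_re) hx₀ (hfd.mono inter_subset_right)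
    (fun z hz ⟨t, _, htz⟩ => (hfm hz.2).ne' (htz ▸ ofReal_im t))
    ((ae_restrict_iff' measurableSet_Ioo).1 hae) hnoext
end

section
/- Let μ be a Borel probability measure on ℝ and let μ^{sc} denote its singular continuous part, i.e. the singular part of μ with respect to Lebesgue measure, restricted to the complement of the set of atoms of μ. Then for μ^{sc}-almost every x ∈ ℝ, lim_{y↓0} Im G_μ(x+iy) = −∞. -/
/-!
The kernel `-Im (z - t)⁻¹` is the Poisson kernel, which is at least `1 / (2y)` on the interval
`[x - y, x + y]` when `z = x + iy`. By Markov's inequality, `-Im G_μ(x + iy)` therefore dominates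
the average density `μ([x - y, x + y]) / (2y)`. At almost every point for the singular part `σ` of
`μ`, the Lebesgue measure has density zero with respect to `σ`, so that this average density tends
to infinity.
-/

open Complex Filter Set Topology MeasureTheory

/-- The Cauchy transform `G_μ(z) = ∫ dμ(t)/(z − t)` of a measure `μ` on `ℝ`. -/
noncomputable def cauchyT (μ : Measure ℝ) (z : ℂ) : ℂ :=
  ∫ t, (z - (t : ℂ))⁻¹ ∂μ

open scoped ENNReal

theorem tendsto_toReal_atTop_of_tendsto_nhds_top {ι : Type*} {l : Filter ι} {f : ι → ℝ≥0∞}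
    (hf : Tendsto f l (𝓝 ∞)) (hfin : ∀ᶠ i in l, f i ≠ ∞) :
    Tendsto (fun i => (f i).toReal) l atTop := by
  refine tendsto_atTop.2 fun b => ?_
  filter_upwards [hf.eventually_const_lt (ENNReal.ofReal_lt_top (r := b)), hfin] with i hlt hne
  exact (ENNReal.ofReal_le_iff_le_toReal hne).1 hlt.le

theorem ae_tendsto_measure_div_nhds_top_of_mutuallySingular {α : Type*} [PseudoMetricSpace α]
    [SecondCountableTopology α] [MeasurableSpace α] [BorelSpace α] {ν ρ : Measure α}
    [IsLocallyFiniteMeasure ν] [IsLocallyFiniteMeasure ρ] (v : VitaliFamily ν) (h : ν ⟂ₘ ρ) :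
    ∀ᵐ x ∂ν, Tendsto (fun a => ν a / ρ a) (v.filterAt x) (𝓝 ∞) := by
  filter_upwards [v.ae_eventually_measure_zero_of_singular h.symm, v.ae_eventually_measure_pos]
    with x hzero hpos
  have hinv : Tendsto (fun a => (ρ a / ν a)⁻¹) (v.filterAt x) (𝓝 ∞) := by
    simpa using hzero.inv
  refine hinv.congr' ?_
  filter_upwards [hpos, v.eventually_measure_lt_top x] with a ha_pos ha_top
  exact ENNReal.inv_div (.inl ha_top.ne) (.inl ha_pos.ne')

theorem ae_singularPart_tendsto_measure_closedBall_div_nhds_top {α : Type*} [MetricSpace α]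
    [SecondCountableTopology α] [HasBesicovitchCovering α] [MeasurableSpace α] [BorelSpace α]
    (μ ρ : Measure α) [IsLocallyFiniteMeasure μ] [IsLocallyFiniteMeasure ρ] :
    ∀ᵐ x ∂μ.singularPart ρ,
      Tendsto (fun r => μ (Metric.closedBall x r) / ρ (Metric.closedBall x r))
        (𝓝[>] 0) (𝓝 ∞) := by
  filter_upwards [ae_tendsto_measure_div_nhds_top_of_mutuallySingular
    (Besicovitch.vitaliFamily (μ.singularPart ρ)) (μ.mutuallySingular_singularPart ρ)] with x hx
  refine tendsto_nhds_top_mono' (hx.comp (Besicovitch.tendsto_filterAt _ x)) fun r => ?_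
  exact ENNReal.div_le_div_right (μ.singularPart_le ρ _) _

theorem im_inv_sub_ofReal (z : ℂ) (t : ℝ) :
    ((z - (t : ℂ))⁻¹).im = -(z.im / ((z.re - t) ^ 2 + z.im ^ 2)) := by
  simp [Complex.inv_im, Complex.normSq_apply, neg_div, sq]

theorem neg_im_inv_sub_ofReal_nonneg {z : ℂ} (hz : 0 ≤ z.im) (t : ℝ) :
    0 ≤ -((z - (t : ℂ))⁻¹).im := by
  rw [im_inv_sub_ofReal, neg_neg]
  positivity

theorem le_neg_im_inv_sub_ofReal_iff {z : ℂ} (hz : 0 < z.im) (t : ℝ) :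
    (2 * z.im)⁻¹ ≤ -((z - (t : ℂ))⁻¹).im ↔ t ∈ Metric.closedBall z.re z.im := by
  rw [im_inv_sub_ofReal, neg_neg, inv_eq_one_div,
    div_le_div_iff₀ (by positivity) (by positivity), Metric.mem_closedBall', Real.dist_eq,
    ← sq_le_sq₀ (abs_nonneg _) hz.le, sq_abs]
  constructor <;> intro h <;> linarith

section CauchyTransform

variable {μ : Measure ℝ} {z : ℂ}

theorem integrable_inv_sub_ofReal [IsFiniteMeasure μ] (hz : z.im ≠ 0) :
    Integrable (fun t : ℝ => (z - (t : ℂ))⁻¹) μ := by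
  refine .of_bound (C := |z.im|⁻¹) (by fun_prop) (.of_forall fun t => ?_)
  rw [norm_inv]
  gcongr
  simpa using Complex.abs_im_le_norm (z - t)

theorem cauchyT_im (hint : Integrable (fun t : ℝ => (z - (t : ℂ))⁻¹) μ) :
    (cauchyT μ z).im = ∫ t : ℝ, ((z - (t : ℂ))⁻¹).im ∂μ :=
  (integral_im hint).symm

theorem measureReal_closedBall_div_le_neg_cauchyT_im (hz : 0 < z.im)
    (hint : Integrable (fun t : ℝ => (z - (t : ℂ))⁻¹) μ) :
    μ.real (Metric.closedBall z.re z.im) / (2 * z.im) ≤ -(cauchyT μ z).im := by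
  have markov := mul_meas_ge_le_integral_of_nonneg
    (.of_forall fun t => neg_im_inv_sub_ofReal_nonneg hz.le t) hint.im.neg (2 * z.im)⁻¹
  simpa only [le_neg_im_inv_sub_ofReal_iff hz, Set.ofPred_mem_eq, integral_neg,
    ← cauchyT_im hint, inv_mul_eq_div] using markov

theorem measure_closedBall_lt_top_of_integrable_inv_sub (hz : 0 < z.im)
    (hint : Integrable (fun t : ℝ => (z - (t : ℂ))⁻¹) μ) :
    μ (Metric.closedBall z.re z.im) < ∞ := by
  have markov : μ {t : ℝ | (2 * z.im)⁻¹ ≤ -((z - (t : ℂ))⁻¹).im} < ∞ :=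
    hint.im.neg.measure_ge_lt_top (inv_pos.2 (mul_pos two_pos hz))
  simpa only [le_neg_im_inv_sub_ofReal_iff hz, Set.ofPred_mem_eq] using markov

theorem isLocallyFiniteMeasure_of_integrable_inv_sub
    (hint : ∀ z : ℂ, 0 < z.im → Integrable (fun t : ℝ => (z - (t : ℂ))⁻¹) μ) :
    IsLocallyFiniteMeasure μ where
  finiteAtNhds x := by
    refine ⟨_, Metric.closedBall_mem_nhds x one_pos, ?_⟩
    simpa using measure_closedBall_lt_top_of_integrable_inv_sub (z := x + Complex.I)
      (by simp) (hint _ (by simp))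

theorem singular_continuous_cauchy_blowup_general (μ : Measure ℝ)
    (hint : ∀ z : ℂ, 0 < z.im → Integrable (fun t : ℝ => (z - (t : ℂ))⁻¹) μ) :
    ∀ᵐ x ∂μ.singularPart volume,
      Tendsto (fun y : ℝ => (cauchyT μ (Complex.ofReal x + y * Complex.I)).im)
        (𝓝[>] (0 : ℝ)) atBot := by
  have : IsLocallyFiniteMeasure μ := isLocallyFiniteMeasure_of_integrable_inv_sub hint
  filter_upwards [ae_singularPart_tendsto_measure_closedBall_div_nhds_top μ volume] with x hx
  have hfin : ∀ᶠ y : ℝ in 𝓝[>] 0,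
      μ (Metric.closedBall x y) / volume (Metric.closedBall x y) ≠ ∞ := by
    filter_upwards [self_mem_nhdsWithin] with y hy
    exact ENNReal.div_ne_top measure_closedBall_lt_top.ne
      (Metric.measure_closedBall_pos volume x hy).ne'
  have htoReal := tendsto_toReal_atTop_of_tendsto_nhds_top hx hfin
  refine tendsto_neg_atTop_iff.1 (tendsto_atTop_mono' _ ?_ htoReal)
  filter_upwards [self_mem_nhdsWithin] with y (hy : 0 < y)
  have him : 0 < (x + y * Complex.I : ℂ).im := by simpa using hy
  rw [ENNReal.toReal_div, ← Measure.real, ← Measure.real, Real.volume_real_closedBall hy.le]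
  simpa using measureReal_closedBall_div_le_neg_cauchyT_im him (hint _ him)

end CauchyTransform

/-- For a Borel probability measure `μ` on `ℝ`, at `μ^{sc}`-almost every `x ∈ ℝ`
(where `μ^{sc}` is the singular part of `μ` with respect to Lebesgue measure,
restricted to the complement of the atoms of `μ`), one has
`Im G_μ(x+iy) → −∞` as `y ↓ 0`. -/
theorem singular_continuous_cauchy_blowup
    (μ : Measure ℝ) [IsProbabilityMeasure μ] :
    ∀ᵐ x ∂((μ.singularPart volume).restrict {x : ℝ | μ {x} = 0}),
      Tendsto (fun y : ℝ => (cauchyT μ (Complex.ofReal x + y * Complex.I)).im)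
        (𝓝[>] (0:ℝ)) atBot := by
  exact ae_restrict_of_ae (singular_continuous_cauchy_blowup_general μ
    fun _ hz => integrable_inv_sub_ofReal hz.ne')
end
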